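/- Let H be a 3-graph on n vertices. Every copy K of K_{2,2,2} in H' contains a tight path of order 4 or 5 which is an x-absorber for every x ∈ S_K. -/

import Mathlib

open Finset
open scoped Classical

/-- The co-degree of a pair of vertices in a 3-graph `H`. -/
def coDeg {V : Type} [DecidableEq V] (H : Finset (Finset V)) (u v : V) : ℕ :=
  (H.filter fun e => u ∈ e ∧ v ∈ e).card

/-- The subhypergraph `H'` of `H` consisting of all edges containing at least one
`(1/3)`-large pair. -/
noncomputable def largeSub {V : Type} [DecidableEq V] [Fintype V]
    (H : Finset (Finset V)) : Finset (Finset V) :=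
  H.filter fun e => ∃ u ∈ e, ∃ v ∈ e, u ≠ v ∧
    (1 / 3 : ℝ) * ((Fintype.card V : ℝ) - 2) ≤ (coDeg H u v : ℝ)

/-- A tight path in a 3-graph `H`. -/
def IsTightPath {V : Type} [DecidableEq V] {t : ℕ} (H : Finset (Finset V))
    (w : Fin t → V) : Prop :=
  Function.Injective w ∧
    ∀ (i : ℕ) (hi : i + 2 < t),
      ({w ⟨i, by omega⟩, w ⟨i + 1, by omega⟩, w ⟨i + 2, by omega⟩} : Finset V) ∈ H

/-!
Split `K` into two disjoint edges; each contains a large pair. If the two pairs lie in the same two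
classes, as `a₁b₁` and `a₂b₂` do, then `a₁ b₁ c a₂ b₂` is the required path for any `c` in the third
class; if they share only one class, as `a₁b₁` and `b₂c₂` do, then `b₁ a₁ c₂ b₂` is. Consecutive
vertices of a tight path in `K` lie in different classes, so they form an edge of the link graph of
every `x` for which `K` is `x`-friendly.
-/

/-- The 3-graph `K_{2,2,2}`, with vertex classes `{i} × Bool` for `i : Fin 3`; its edges are the
graphs of the functions `Fin 3 → Bool`. It is the model in which the absorbing paths are built. -/
def octahedron : Finset (Finset (Fin 3 × Bool)) :=
  univ.image fun f : Fin 3 → Bool => {(0, f 0), (1, f 1), (2, f 2)}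

lemma insert_pair_mem_octahedron {i j k : Fin 3} (hij : i ≠ j) (hjk : j ≠ k) (hik : i ≠ k)
    (x y z : Bool) : {(i, x), (j, y), (k, z)} ∈ octahedron := by
  revert i j k x y z
  decide

lemma fst_injOn_of_mem_octahedron {s : Finset (Fin 3 × Bool)} (hs : s ∈ octahedron) :
    Set.InjOn Prod.fst (s : Set (Fin 3 × Bool)) := by
  obtain ⟨f, -, rfl⟩ := mem_image.1 hs
  intro p hp q hq hpq
  simp only [coe_insert, coe_singleton, Set.mem_insert_iff, Set.mem_singleton_iff] at hp hq
  rcases hp with rfl | rfl | rfl <;> rcases hq with rfl | rfl | rfl <;> simp_all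

lemma isTightPath_octahedron_four {i j k : Fin 3} (hij : i ≠ j) (hjk : j ≠ k) (hik : i ≠ k) :
    IsTightPath octahedron ![(j, false), (i, false), (k, true), (j, true)] := by
  refine ⟨List.nodup_ofFn.1 (by simp [hij, hij.symm, hjk.symm, hik]), fun m hm => ?_⟩
  obtain rfl | rfl : m = 0 ∨ m = 1 := by omega
  · exact insert_pair_mem_octahedron hij.symm hik hjk _ _ _
  · exact insert_pair_mem_octahedron hik hjk.symm hij _ _ _

lemma isTightPath_octahedron_five {i j k : Fin 3} (hij : i ≠ j) (hjk : j ≠ k) (hik : i ≠ k) :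
    IsTightPath octahedron ![(i, false), (j, false), (k, false), (i, true), (j, true)] := by
  refine ⟨List.nodup_ofFn.1 (by simp [hij, hij.symm, hjk, hik]), fun m hm => ?_⟩
  obtain rfl | rfl | rfl : m = 0 ∨ m = 1 ∨ m = 2 := by omega
  · exact insert_pair_mem_octahedron hij hjk hik _ _ _
  · exact insert_pair_mem_octahedron hjk hik.symm hij.symm _ _ _
  · exact insert_pair_mem_octahedron hik.symm hij hjk.symm _ _ _

lemma exists_distinct_eq_or_share {i j k l : Fin 3} (hij : i ≠ j) (hkl : k ≠ l) :
    ∃ a b c : Fin 3, a ≠ b ∧ b ≠ c ∧ a ≠ c ∧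
      s(i, j) = s(a, b) ∧ (s(k, l) = s(a, b) ∨ s(k, l) = s(b, c)) := by
  revert i j k l
  decide

lemma exists_isTightPath_octahedron {i j k l : Fin 3} (hij : i ≠ j) (hkl : k ≠ l) :
    ∃ n ≤ 1, ∃ p : Fin (n + 4) → Fin 3 × Bool,
      IsTightPath octahedron p ∧
      s(p 0, p 1) = s(i, j).map (·, false) ∧
      s(p (Fin.last (n + 3)), p (Fin.last (n + 2)).castSucc) = s(k, l).map (·, true) := by
  obtain ⟨a, b, c, hab, hbc, hac, hfirst, hlast⟩ := exists_distinct_eq_or_share hij hkl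
  rw [hfirst]
  rcases hlast with hlast | hlast <;> rw [hlast]
  · exact ⟨1, le_rfl, _, isTightPath_octahedron_five hab hbc hac, rfl, Sym2.eq_swap⟩
  · exact ⟨0, zero_le_one, _, isTightPath_octahedron_four hab hbc hac, Sym2.eq_swap, rfl⟩

namespace IsTightPath

variable {V W : Type} [DecidableEq V] [DecidableEq W] {H : Finset (Finset V)} {t : ℕ}
  {w : Fin t → V}

lemma map {K : Finset (Finset W)} (hw : IsTightPath H w) (φ : V ↪ W)
    (hφ : ∀ e ∈ H, e.map φ ∈ K) : IsTightPath K (φ ∘ w) :=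
  ⟨φ.injective.comp hw.1, fun i hi => by simpa using hφ _ (hw.2 i hi)⟩

lemma exists_edge_of_consecutive {n : ℕ} {w : Fin (n + 3) → V} (hw : IsTightPath H w)
    (j : Fin (n + 2)) : ∃ e ∈ H, w j.castSucc ∈ e ∧ w j.succ ∈ e := by
  cases j using Fin.lastCases with
  | last =>
    exact ⟨_, hw.2 n (by omega), mem_insert_of_mem (mem_insert_self _ _), by simp [Fin.last]⟩
  | cast j =>
    exact ⟨_, hw.2 j (by omega), mem_insert_self _ _, mem_insert_of_mem (mem_insert_self _ _)⟩

lemma fst_ne_of_octahedron {n : ℕ} {p : Fin (n + 3) → Fin 3 × Bool}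
    (hp : IsTightPath octahedron p) (j : Fin (n + 2)) : (p j.castSucc).1 ≠ (p j.succ).1 := by
  obtain ⟨e, he, hmem, hmem'⟩ := hp.exists_edge_of_consecutive j
  intro hfst
  exact j.castSucc_lt_succ.ne (hp.1 (fst_injOn_of_mem_octahedron he hmem hmem' hfst))

end IsTightPath

lemma exists_prod_bool_embedding {ι V : Type*} {P : ι → Finset V}
    (hP : ∀ i, 1 < #(P i)) (hdisj : Pairwise (Function.onFun Disjoint P)) :
    ∃ φ : ι × Bool ↪ V, ∀ i b, φ (i, b) ∈ P i := by
  choose u hu v hv huv using fun i => one_lt_card.1 (hP i)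
  have hmem : ∀ i b, (bif b then u i else v i) ∈ P i := by
    rintro i (_ | _)
    exacts [hv i, hu i]
  refine ⟨⟨fun p => bif p.2 then u p.1 else v p.1, ?_⟩, hmem⟩
  rintro ⟨i, b⟩ ⟨j, c⟩ heq
  obtain rfl : i = j := by
    by_contra hij
    exact disjoint_left.1 (hdisj hij) (hmem i b) ((congrArg (· ∈ P j) heq).mpr (hmem j c))
  cases b <;> cases c <;> simp_all [eq_comm]

lemma forall_ne_fin_three_of_symm {R : Fin 3 → Fin 3 → Prop} (hR : ∀ i j, R i j → R j i)
    (h01 : R 0 1) (h12 : R 1 2) (h02 : R 0 2) {i j : Fin 3} (hij : i ≠ j) : R i j := by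
  fin_cases i <;> fin_cases j <;> simp_all

lemma exists_octahedron_embedding {V : Type*} {A B C : Finset V}
    (hA : 1 < #A) (hB : 1 < #B) (hC : 1 < #C)
    (hAB : Disjoint A B) (hAC : Disjoint A C) (hBC : Disjoint B C) :
    ∃ φ : Fin 3 × Bool ↪ V, ∀ i b, φ (i, b) ∈ ![A, B, C] i :=
  exists_prod_bool_embedding (by simp [Fin.forall_fin_succ, hA, hB, hC])
    fun _ _ => forall_ne_fin_three_of_symm (R := Function.onFun Disjoint ![A, B, C])
      (fun _ _ h => Disjoint.symm h) hAB hBC hAC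

section Embedding

variable {V : Type} [DecidableEq V] {A B C : Finset V} {H : Finset (Finset V)}
  {φ : Fin 3 × Bool ↪ V}

lemma map_mem_of_mem_octahedron (hφ : ∀ i b, φ (i, b) ∈ ![A, B, C] i)
    (hK : ∀ a ∈ A, ∀ b ∈ B, ∀ c ∈ C, {a, b, c} ∈ H) {s : Finset (Fin 3 × Bool)}
    (hs : s ∈ octahedron) : s.map φ ∈ H := by
  obtain ⟨f, -, rfl⟩ := mem_image.1 hs
  simpa using hK _ (hφ 0 (f 0)) _ (hφ 1 (f 1)) _ (hφ 2 (f 2))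

lemma exists_adj_of_layer {G : SimpleGraph V} (hφ : ∀ i b, φ (i, b) ∈ ![A, B, C] i)
    (hG : ∀ a ∈ A, ∀ b ∈ B, ∀ c ∈ C, ∃ u ∈ ({a, b, c} : Finset V),
      ∃ v ∈ ({a, b, c} : Finset V), G.Adj u v) (b : Bool) :
    ∃ i j, i ≠ j ∧ G.Adj (φ (i, b)) (φ (j, b)) := by
  obtain ⟨u, hu, v, hv, huv⟩ := hG _ (hφ 0 b) _ (hφ 1 b) _ (hφ 2 b)
  have hlayer : ∀ y ∈ ({φ (0, b), φ (1, b), φ (2, b)} : Finset V), ∃ i, φ (i, b) = y := by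
    simp
  obtain ⟨i, rfl⟩ := hlayer u hu
  obtain ⟨j, rfl⟩ := hlayer v hv
  exact ⟨i, j, fun hij => huv.ne (by rw [hij]), huv⟩

lemma insert_pair_mem_of_fst_ne (hφ : ∀ i b, φ (i, b) ∈ ![A, B, C] i) {x : V}
    (hx : ∀ a ∈ A, ∀ b ∈ B, ∀ c ∈ C, {x, a, b} ∈ H ∧ {x, b, c} ∈ H ∧ {x, a, c} ∈ H)
    {p q : Fin 3 × Bool} (hpq : p.1 ≠ q.1) : {x, φ p, φ q} ∈ H := by
  have hlink (b₀ b₁ b₂ : Bool) := hx _ (hφ 0 b₀) _ (hφ 1 b₁) _ (hφ 2 b₂)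
  exact forall_ne_fin_three_of_symm (R := fun i j => ∀ b c, {x, φ (i, b), φ (j, c)} ∈ H)
    (fun i j h b c => pair_comm (φ (i, c)) _ ▸ h c b)
    (fun b c => (hlink b c true).1) (fun b c => (hlink true b c).2.1)
    (fun b c => (hlink b true c).2.2) hpq p.2 q.2

end Embedding

theorem stmt_12_general {V : Type} [DecidableEq V] (H : Finset (Finset V)) (G : SimpleGraph V)
    {A B C : Finset V} (hA : 1 < #A) (hB : 1 < #B) (hC : 1 < #C)
    (hAB : Disjoint A B) (hAC : Disjoint A C) (hBC : Disjoint B C)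
    (hK : ∀ a ∈ A, ∀ b ∈ B, ∀ c ∈ C, {a, b, c} ∈ H ∧
      ∃ u ∈ ({a, b, c} : Finset V), ∃ v ∈ ({a, b, c} : Finset V), G.Adj u v) :
    ∃ n ≤ 1, ∃ w : Fin (n + 4) → V,
      (∀ k, w k ∈ A ∪ B ∪ C) ∧
      IsTightPath H w ∧
      G.Adj (w 0) (w 1) ∧
      G.Adj (w (Fin.last (n + 3))) (w (Fin.last (n + 2)).castSucc) ∧
      ∀ x : V,
        (∀ a ∈ A, ∀ b ∈ B, ∀ c ∈ C, {x, a, b} ∈ H ∧ {x, b, c} ∈ H ∧ {x, a, c} ∈ H) →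
        ∀ j : Fin (n + 3), {x, w j.castSucc, w j.succ} ∈ H := by
  have hKH a ha b hb c hc := (hK a ha b hb c hc).1
  have hKG a ha b hb c hc := (hK a ha b hb c hc).2
  obtain ⟨φ, hφ⟩ := exists_octahedron_embedding hA hB hC hAB hAC hBC
  obtain ⟨i, j, hij, hadj⟩ := exists_adj_of_layer hφ hKG false
  obtain ⟨k, l, hkl, hadj'⟩ := exists_adj_of_layer hφ hKG true
  obtain ⟨n, hn, p, hp, hfirst, hlast⟩ := exists_isTightPath_octahedron hij hkl
  have hunion (i : Fin 3) : ![A, B, C] i ⊆ A ∪ B ∪ C := by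
    fin_cases i
    exacts [subset_union_left.trans subset_union_left, subset_union_right.trans subset_union_left,
      subset_union_right]
  refine ⟨n, hn, φ ∘ p, fun _ => hunion _ (hφ _ _),
    hp.map φ fun _ => map_mem_of_mem_octahedron hφ hKH, ?_, ?_, fun x hx m => ?_⟩
  · exact (G.comap φ).mem_edgeSet.1 (hfirst ▸ hadj)
  · exact (G.comap φ).mem_edgeSet.1 (hlast ▸ hadj')
  · exact insert_pair_mem_of_fst_ne hφ hx (hp.fst_ne_of_octahedron m)

/-- The graph `G_α` of `α`-large pairs of `H`; absorbers are required to have their endpairs in it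
for `α = 1 / 3`. -/
def largePairGraph {V : Type} [DecidableEq V] [Fintype V] (α : ℝ) (H : Finset (Finset V)) :
    SimpleGraph V where
  Adj u v := u ≠ v ∧ α * ((Fintype.card V : ℝ) - 2) ≤ (coDeg H u v : ℝ)
  symm := ⟨fun u v ⟨hne, hle⟩ => ⟨hne.symm, by simpa only [coDeg, and_comm] using hle⟩⟩
  loopless := ⟨fun _ h => h.1 rfl⟩

lemma largeSub_subset {V : Type} [DecidableEq V] [Fintype V] (H : Finset (Finset V)) :
    largeSub H ⊆ H :=
  filter_subset _ _

lemma mem_largeSub {V : Type} [DecidableEq V] [Fintype V] {H : Finset (Finset V)}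
    {e : Finset V} :
    e ∈ largeSub H ↔ e ∈ H ∧ ∃ u ∈ e, ∃ v ∈ e, (largePairGraph (1 / 3) H).Adj u v :=
  mem_filter

/-- Every copy `K` of `K_{2,2,2}` in `H'` (given by its classes `A`, `B`, `C`) contains a
tight path of order 4 or 5, with `(1/3)`-large endpairs, which is an `x`-absorber for
every `x ∈ S_K`, i.e. for every `x` for which `K` is `x`-friendly. -/
theorem stmt_12 (V : Type) [DecidableEq V] [Fintype V]
    (H : Finset (Finset V)) (hH : ∀ e ∈ H, e.card = 3)
    (A B C : Finset V) (hA : A.card = 2) (hB : B.card = 2) (hC : C.card = 2)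
    (hAB : Disjoint A B) (hAC : Disjoint A C) (hBC : Disjoint B C)
    (hK : ∀ a ∈ A, ∀ b ∈ B, ∀ c ∈ C, ({a, b, c} : Finset V) ∈ largeSub H) :
    ∃ (i : ℕ) (hi : i = 4 ∨ i = 5) (w : Fin i → V),
      (∀ k, w k ∈ A ∪ B ∪ C) ∧
      IsTightPath H w ∧
      (1 / 3 : ℝ) * ((Fintype.card V : ℝ) - 2) ≤
        (coDeg H (w ⟨0, by omega⟩) (w ⟨1, by omega⟩) : ℝ) ∧
      (1 / 3 : ℝ) * ((Fintype.card V : ℝ) - 2) ≤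
        (coDeg H (w ⟨i - 1, by omega⟩) (w ⟨i - 2, by omega⟩) : ℝ) ∧
      ∀ x : V,
        (∀ a ∈ A, ∀ b ∈ B, ∀ c ∈ C,
          insert x ({a, b} : Finset V) ∈ largeSub H ∧
          insert x ({b, c} : Finset V) ∈ largeSub H ∧
          insert x ({a, c} : Finset V) ∈ largeSub H) →
        ∀ (j : ℕ) (hj : j + 1 < i),
          ({x, w ⟨j, by omega⟩, w ⟨j + 1, by omega⟩} : Finset V) ∈ H := by
  have hsub := largeSub_subset H
  obtain ⟨n, hn, w, hmem, hpath, hfirst, hlast, habs⟩ :=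
    stmt_12_general H (largePairGraph (1 / 3) H) hA.ge hB.ge hC.ge hAB hAC hBC
      fun a ha b hb c hc => mem_largeSub.1 (hK a ha b hb c hc)
  exact ⟨n + 4, by omega, w, hmem, hpath, hfirst.2, hlast.2, fun x hx j hj =>
    habs x (fun a ha b hb c hc => (hx a ha b hb c hc).imp (@hsub _) (And.imp (@hsub _) (@hsub _)))
      ⟨j, by omega⟩⟩
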